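/- Theorem 11 (convergence of the Distributed Condat–Vũ algorithm, Form I): Suppose the parameters γ > 0 and σ > 0 satisfy γ·(σ·‖Σ_{m=1}^M ω_m·K_m*∘K_m‖ + L/2) < 1, where L satisfies the averaged smoothness condition (1/M²)·Σ_m (1/ω_m)·‖∇F_m(x) − ∇F_m(x')‖² ≤ L²·‖x − x'‖² for all x, x' ∈ 𝒳. Then the iterate x^k of the Distributed Condat–Vũ algorithm converges to a minimizer x̄ of Ψ, and each u_m^k converges to some u_m* ∈ 𝒰_m. -/

import Mathlib

open Filter Topology RealInnerProductSpace

noncomputable section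

/-- `p` is a minimizer of `y ↦ σ·G(y) + (1/2)‖y − z‖²`, i.e. `p = prox_{σG}(z)`
(the minimizer is unique when `G` is convex). -/
def IsProxPt {E : Type*} [NormedAddCommGroup E] [InnerProductSpace ℝ E]
    (σ : ℝ) (G : E → ℝ) (z p : E) : Prop :=
  ∀ y, σ * G p + ‖p - z‖ ^ 2 / 2 ≤ σ * G y + ‖y - z‖ ^ 2 / 2

/-- `u ∈ ∂G(z)`. -/
def IsSubgradientAt {E : Type*} [NormedAddCommGroup E] [InnerProductSpace ℝ E]
    (G : E → ℝ) (z u : E) : Prop :=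
  ∀ y, G z + ⟪u, y - z⟫ ≤ G y

/-!
Give the product `∏ U i` the Euclidean norm and put `K̃ x = (√ω i • K i x)_i`. Then
`‖K̃‖² = ‖∑ i, ω i • K i* ∘ K i‖`, and after rescaling the dual blocks the distributed iteration is
the ordinary Condat–Vũ iteration for `R + f + H̃ ∘ K̃` on `X × ∏ U i`, where `f` is the average of
the `F i` and `H̃ ∘ K̃` that of the `H i ∘ K i`.

A Condat–Vũ step is a forward–backward step in the metric of `[[γ⁻¹, -K̃*], [-K̃, σ⁻¹]]`. By
Cauchy–Schwarz with weights `ω i` the gradient of `f` is `L`-Lipschitz, hence `1/L`-cocoercive by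
Baillon–Haddad, so the forward step costs at most `L/2 * ‖x (k+1) - x k‖²`. The step-size condition
says that the metric exceeds this by a positive definite form. Hence the distance to every
primal-dual solution decreases, consecutive iterates approach each other, and Opial's lemma yields
convergence.
-/

section Subgradient

variable {E : Type*} [NormedAddCommGroup E] [InnerProductSpace ℝ E]

theorem IsSubgradientAt.inner_sub_nonneg {G : E → ℝ} {z w u v : E}
    (hu : IsSubgradientAt G z u) (hv : IsSubgradientAt G w v) : 0 ≤ ⟪u - v, z - w⟫ := by
  have huw := hu w
  have hvz := hv z
  rw [← neg_sub z w, inner_neg_right] at huw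
  rw [inner_sub_left]
  linarith

theorem IsSubgradientAt.of_tendsto {ι : Type*} {l : Filter ι} [l.NeBot] {G : E → ℝ}
    (hG : Continuous G) {z u : ι → E} {z₀ u₀ : E} (hz : Tendsto z l (𝓝 z₀))
    (hu : Tendsto u l (𝓝 u₀)) (h : ∀ i, IsSubgradientAt G (z i) (u i)) :
    IsSubgradientAt G z₀ u₀ := fun y =>
  le_of_tendsto' (((hG.tendsto z₀).comp hz).add (hu.inner (hz.const_sub y))) fun i => h i y

theorem hasDerivAt_line_of_hasGradientAt [CompleteSpace E] {f : E → ℝ} {v x d : E} {t : ℝ}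
    (hf : HasGradientAt f v (x + t • d)) :
    HasDerivAt (fun s : ℝ => f (x + s • d)) ⟪v, d⟫ t := by
  have hline : HasDerivAt (fun s : ℝ => x + s • d) d t := by
    simpa using ((hasDerivAt_id t).smul_const d).const_add x
  simpa [Function.comp_def] using hf.hasFDerivAt.comp_hasDerivAt t hline

theorem IsSubgradientAt.neg_of_forall_add_le [CompleteSpace E] {G φ : E → ℝ} {p v : E}
    (hG : ConvexOn ℝ Set.univ G) (hφ : HasGradientAt φ v p)
    (hmin : ∀ y, G p + φ p ≤ G y + φ y) : IsSubgradientAt G p (-v) := by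
  intro y
  have hderiv : HasDerivAt (fun t : ℝ => φ (p + t • (y - p))) ⟪v, y - p⟫ 0 :=
    hasDerivAt_line_of_hasGradientAt (by simpa using hφ)
  have hslope : G p - G y ≤ ⟪v, y - p⟫ := by
    refine ge_of_tendsto hderiv.tendsto_slope_zero_right ?_
    filter_upwards [Ioc_mem_nhdsGT (zero_lt_one' ℝ)] with t ht
    have hconv : G (p + t • (y - p)) ≤ (1 - t) * G p + t * G y := by
      have hline : p + t • (y - p) = (1 - t) • p + t • y := by module
      rw [hline]
      exact hG.2 (Set.mem_univ p) (Set.mem_univ y) (sub_nonneg.2 ht.2) ht.1.le (by ring)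
    have hmin_t := hmin (p + t • (y - p))
    simp only [zero_add, zero_smul, add_zero, smul_eq_mul]
    rw [le_inv_mul_iff₀ ht.1]
    linarith
  rw [inner_neg_left]
  linarith

theorem IsSubgradientAt.of_hasGradientAt [CompleteSpace E] {f : E → ℝ} {v x : E}
    (hf : ConvexOn ℝ Set.univ f) (hf' : HasGradientAt f v x) : IsSubgradientAt f x v := by
  have hneg : HasGradientAt (-f) (-v) x := by
    rw [hasGradientAt_iff_hasFDerivAt, map_neg]
    exact hf'.hasFDerivAt.neg
  simpa using neg_of_forall_add_le hf hneg fun y => by simp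

theorem hasGradientAt_half_sq_norm_sub [CompleteSpace E] (z p : E) :
    HasGradientAt (fun y => ‖y - z‖ ^ 2 / 2) (p - z) p := by
  simp only [hasGradientAt_iff_hasFDerivAt, div_eq_inv_mul]
  refine (((hasFDerivAt_id p).sub_const z).norm_sq.const_mul (2⁻¹ : ℝ)).congr_fderiv ?_
  ext
  simp

theorem IsProxPt.isSubgradientAt [CompleteSpace E] {σ : ℝ} {G : E → ℝ} {z p : E}
    (hG : ConvexOn ℝ Set.univ G) (hσ : 0 < σ) (h : IsProxPt σ G z p) :
    IsSubgradientAt G p (σ⁻¹ • (z - p)) := by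
  intro y
  have hσG : IsSubgradientAt (fun y => σ * G y) p (-(p - z)) :=
    .neg_of_forall_add_le (hG.smul hσ.le) (hasGradientAt_half_sq_norm_sub z p) h
  have hy := hσG y
  rw [neg_sub] at hy
  rw [real_inner_smul_left, ← mul_le_mul_iff_right₀ hσ, mul_add, mul_inv_cancel_left₀ hσ.ne']
  exact hy

/-- By Moreau's identity, `u'` is the proximal point of the conjugate of `G` at `u + s • w`. -/
theorem IsProxPt.isSubgradientAt_add_smul_sub [CompleteSpace E] {s : ℝ} {G : E → ℝ}
    {u u' w p : E} (hG : ConvexOn ℝ Set.univ G) (hs : 0 < s)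
    (h : IsProxPt (1 / s) G ((1 / s) • (u + s • w)) p) (hu' : u' = u + s • w - s • p) :
    IsSubgradientAt G (w + s⁻¹ • (u - u')) u' := by
  have hsub := h.isSubgradientAt hG (one_div_pos.2 hs)
  rw [one_div, inv_inv, smul_sub, smul_inv_smul₀ hs.ne', ← hu'] at hsub
  have hp : w + s⁻¹ • (u - u') = p := by
    rw [hu', ← sub_add, sub_add_cancel_left, smul_add, smul_neg, inv_smul_smul₀ hs.ne',
      inv_smul_smul₀ hs.ne', add_neg_cancel_left]
  rwa [hp]

end Subgradient

section SmoothConvex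

variable {E : Type*} [NormedAddCommGroup E] [InnerProductSpace ℝ E]

/-- `C` is `1/L`-cocoercive, i.e. `L⁻¹ ‖C x - C y‖² ≤ ⟪C x - C y, x - y⟫`; the constant is moved to
the right so that no division by `L` occurs. -/
def IsCocoercive (L : ℝ) (C : E → E) : Prop :=
  ∀ x y, ‖C x - C y‖ ^ 2 ≤ L * ⟪C x - C y, x - y⟫

theorem IsCocoercive.norm_sub_le {L : ℝ} {C : E → E} (hC : IsCocoercive L C) (hL : 0 ≤ L)
    (x y : E) : ‖C x - C y‖ ≤ L * ‖x - y‖ := by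
  rcases (norm_nonneg (C x - C y)).eq_or_lt with h | h
  · rw [← h]
    positivity
  · refine le_of_mul_le_mul_left ?_ h
    calc ‖C x - C y‖ * ‖C x - C y‖ ≤ L * ⟪C x - C y, x - y⟫ := by simpa only [sq] using hC x y
      _ ≤ L * (‖C x - C y‖ * ‖x - y‖) := by gcongr; exact real_inner_le_norm _ _
      _ = ‖C x - C y‖ * (L * ‖x - y‖) := by ring

theorem IsCocoercive.continuous {L : ℝ} {C : E → E} (hC : IsCocoercive L C) (hL : 0 ≤ L) :
    Continuous C := by
  lift L to NNReal using hL
  refine (LipschitzWith.of_dist_le_mul (K := L) fun x y => ?_).continuous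
  simpa only [dist_eq_norm] using hC.norm_sub_le L.2 x y

theorem IsCocoercive.neg_le_inner {L : ℝ} {C : E → E} (hC : IsCocoercive L C) (hL : 0 < L)
    (x x' y : E) : -(L / 4 * ‖x' - x‖ ^ 2) ≤ ⟪C x - C y, x' - y⟫ := by
  have hsq : ‖(2 : ℝ) • (C x - C y) + L • (x' - x)‖ ^ 2
      = 4 * ‖C x - C y‖ ^ 2 + 4 * L * ⟪C x - C y, x' - x⟫ + L ^ 2 * ‖x' - x‖ ^ 2 := by
    rw [norm_add_sq_real, real_inner_smul_left, real_inner_smul_right]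
    simp only [norm_smul, Real.norm_eq_abs, mul_pow, sq_abs]
    ring
  have hsplit : ⟪C x - C y, x' - y⟫ = ⟪C x - C y, x - y⟫ + ⟪C x - C y, x' - x⟫ := by
    rw [← inner_add_right]
    congr 1
    abel
  have hnonneg := hsq ▸ sq_nonneg ‖(2 : ℝ) • (C x - C y) + L • (x' - x)‖
  rw [hsplit]
  refine le_of_mul_le_mul_left ?_ (show 0 < 4 * L by positivity)
  linarith [hC x y]

variable [CompleteSpace E] {f : E → ℝ} {g : E → E} {L : NNReal}

theorem le_add_sq_of_lipschitzWith_gradient (hf : ∀ x, HasGradientAt f (g x) x)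
    (hg : LipschitzWith L g) (x d : E) : f (x + d) ≤ f x + ⟪g x, d⟫ + L / 2 * ‖d‖ ^ 2 := by
  let gap : ℝ → ℝ := fun t => f (x + t • d) - t * ⟪g x, d⟫ - t ^ 2 * (L / 2 * ‖d‖ ^ 2)
  have hgap : ∀ t, HasDerivAt gap
      (⟪g (x + t • d), d⟫ - 1 * ⟪g x, d⟫ - 2 * t * (L / 2 * ‖d‖ ^ 2)) t := fun t =>
    ((hasDerivAt_line_of_hasGradientAt (hf _)).sub ((hasDerivAt_id t).mul_const _)).sub
      (by simpa using (hasDerivAt_pow 2 t).mul_const (L / 2 * ‖d‖ ^ 2))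
  have hanti : AntitoneOn gap (Set.Icc 0 1) := by
    refine antitoneOn_of_deriv_nonpos (convex_Icc 0 1)
      (fun t _ => (hgap t).continuousAt.continuousWithinAt)
      (fun t _ => (hgap t).differentiableAt.differentiableWithinAt) fun t ht => ?_
    rw [interior_Icc] at ht
    have hinner : ⟪g (x + t • d) - g x, d⟫ ≤ t * (L * ‖d‖ ^ 2) :=
      calc ⟪g (x + t • d) - g x, d⟫ ≤ ‖g (x + t • d) - g x‖ * ‖d‖ := real_inner_le_norm _ _
        _ ≤ L * ‖x + t • d - x‖ * ‖d‖ := by gcongr; exact hg.norm_sub_le _ _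
        _ = t * (L * ‖d‖ ^ 2) := by
          rw [add_sub_cancel_left, norm_smul, Real.norm_of_nonneg ht.1.le]
          ring
    rw [inner_sub_left] at hinner
    rw [(hgap t).deriv]
    linarith
  have hle : gap 1 ≤ gap 0 :=
    hanti (Set.left_mem_Icc.2 zero_le_one) (Set.right_mem_Icc.2 zero_le_one) zero_le_one
  simp only [gap, one_smul, zero_smul, add_zero] at hle
  linarith

theorem add_sq_norm_gradient_sub_le (hL : 0 < L) (hconv : ConvexOn ℝ Set.univ f)
    (hf : ∀ x, HasGradientAt f (g x) x) (hg : LipschitzWith L g) (x y : E) :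
    f x + ⟪g x, y - x⟫ + ‖g y - g x‖ ^ 2 / (2 * L) ≤ f y := by
  -- Compare both bounds at the gradient step `y - L⁻¹ (g y - g x)`.
  have hupper := le_add_sq_of_lipschitzWith_gradient hf hg y (-((L : ℝ)⁻¹ • (g y - g x)))
  have hlower := IsSubgradientAt.of_hasGradientAt hconv (hf x) (y + -((L : ℝ)⁻¹ • (g y - g x)))
  have hdiff : ⟪g y, g y - g x⟫ - ⟪g x, g y - g x⟫ = ‖g y - g x‖ ^ 2 := by
    rw [← inner_sub_left, real_inner_self_eq_norm_sq]
  rw [add_sub_right_comm, inner_add_right, inner_neg_right, real_inner_smul_right] at hlower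
  rw [inner_neg_right, real_inner_smul_right, norm_neg, norm_smul, mul_pow,
    Real.norm_of_nonneg (by positivity)] at hupper
  have hstep : ‖g y - g x‖ ^ 2 / (2 * L) = (L : ℝ)⁻¹ * (⟪g y, g y - g x⟫ - ⟪g x, g y - g x⟫)
      - L / 2 * ((L : ℝ)⁻¹ ^ 2 * ‖g y - g x‖ ^ 2) := by
    have hL' : (L : ℝ) ≠ 0 := by positivity
    rw [hdiff]
    field_simp
    ring
  linarith

/-- The Baillon–Haddad theorem. -/
theorem isCocoercive_of_lipschitzWith_gradient (hL : 0 < L) (hconv : ConvexOn ℝ Set.univ f)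
    (hf : ∀ x, HasGradientAt f (g x) x) (hg : LipschitzWith L g) : IsCocoercive L g := by
  intro x y
  have hxy := add_sq_norm_gradient_sub_le hL hconv hf hg x y
  have hyx := add_sq_norm_gradient_sub_le hL hconv hf hg y x
  rw [norm_sub_rev, ← neg_sub x y, inner_neg_right] at hxy
  have hsum : ‖g x - g y‖ ^ 2 / L ≤ ⟪g x - g y, x - y⟫ := by
    have hhalves : ‖g x - g y‖ ^ 2 / L
        = ‖g x - g y‖ ^ 2 / (2 * L) + ‖g x - g y‖ ^ 2 / (2 * L) := by ring
    rw [inner_sub_left]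
    linarith
  rwa [div_le_iff₀' (by exact_mod_cast hL)] at hsum

end SmoothConvex

section Fejer

variable {Z : Type*} [NormedAddCommGroup Z]

theorem tendsto_zero_of_mul_sq_norm_le {α : Type*} {l : Filter α} {w : α → Z} {b : α → ℝ} {c : ℝ}
    (hc : 0 < c) (h : ∀ i, c * ‖w i‖ ^ 2 ≤ b i) (hb : Tendsto b l (𝓝 0)) :
    Tendsto w l (𝓝 0) := by
  rw [tendsto_zero_iff_norm_tendsto_zero]
  have hsqrt : Tendsto (fun i => √(b i / c)) l (𝓝 0) := by
    simpa using (hb.div_const c).sqrt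
  refine squeeze_zero (fun i => norm_nonneg _) (fun i => Real.le_sqrt_of_sq_le ?_) hsqrt
  rw [le_div_iff₀' hc]
  exact h i

theorem tendsto_zero_of_add_mul_sq_norm_le {w : ℕ → Z} {b : ℕ → ℝ} {c : ℝ} (hc : 0 < c)
    (hb : ∀ k, 0 ≤ b k) (h : ∀ k, b (k + 1) + c * ‖w k‖ ^ 2 ≤ b k) :
    Tendsto w atTop (𝓝 0) := by
  have hanti : Antitone b := antitone_nat_of_succ_le fun k =>
    (le_add_of_nonneg_right (by positivity)).trans (h k)
  have hlim := tendsto_atTop_ciInf hanti ⟨0, Set.forall_mem_range.2 hb⟩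
  refine tendsto_zero_of_mul_sq_norm_le hc (fun k => le_sub_iff_add_le'.2 (h k)) ?_
  simpa using hlim.sub ((tendsto_add_atTop_iff_nat 1).2 hlim)

/-- Opial's lemma, with the squared distance replaced by `V (z - s)`. -/
theorem exists_tendsto_of_antitone_of_subseq_limit_mem [ProperSpace Z] {V : Z → ℝ}
    (hVcont : Continuous V) (hV0 : V 0 = 0) {c : ℝ} (hc : 0 < c) (hV : ∀ w, c * ‖w‖ ^ 2 ≤ V w)
    {S : Set Z} (hS : S.Nonempty) {z : ℕ → Z} (hanti : ∀ s ∈ S, Antitone fun k => V (z k - s))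
    (hmem : ∀ w (φ : ℕ → ℕ), Tendsto φ atTop atTop → Tendsto (z ∘ φ) atTop (𝓝 w) → w ∈ S) :
    ∃ w ∈ S, Tendsto z atTop (𝓝 w) := by
  obtain ⟨s, hs⟩ := hS
  have hbounded : ∀ k, z k ∈ Metric.closedBall s √(V (z 0 - s) / c) := fun k => by
    rw [mem_closedBall_iff_norm]
    refine Real.le_sqrt_of_sq_le ?_
    rw [le_div_iff₀' hc]
    exact (hV _).trans (hanti s hs k.zero_le)
  obtain ⟨w, -, φ, hφ, hlim⟩ := tendsto_subseq_of_bounded Metric.isBounded_closedBall hbounded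
  have hw : w ∈ S := hmem w φ hφ.tendsto_atTop hlim
  have hVlim : Tendsto (fun k => V (z k - w)) atTop (𝓝 0) := by
    rw [tendsto_iff_tendsto_subseq_of_antitone (hanti w hw) hφ.tendsto_atTop, ← hV0,
      ← sub_self w]
    exact (hVcont.tendsto _).comp (hlim.sub_const w)
  exact ⟨w, hw, tendsto_sub_nhds_zero_iff.1
    (tendsto_zero_of_mul_sq_norm_le hc (fun k => hV (z k - w)) hVlim)⟩

end Fejer

section CondatVu

open ContinuousLinearMap (adjoint)

variable {X U : Type*} [NormedAddCommGroup X] [InnerProductSpace ℝ X]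
  [NormedAddCommGroup U] [InnerProductSpace ℝ U]

/-- The quadratic form of the block operator `[[γ⁻¹, -K*], [-K, σ⁻¹]]`: the squared norm, for small
enough steps `γ` and `σ`, in which the Condat–Vũ iteration is a forward–backward iteration. -/
def condatVuForm (K : X →L[ℝ] U) (γ σ : ℝ) (z : X × U) : ℝ :=
  γ⁻¹ * ‖z.1‖ ^ 2 - 2 * ⟪z.2, K z.1⟫ + σ⁻¹ * ‖z.2‖ ^ 2

theorem exists_pos_mul_add_sq_le_of_sq_lt_mul {a b k : ℝ} (ha : 0 < a) (hb : 0 < b)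
    (hk : k ^ 2 < a * b) :
    ∃ c > 0, ∀ s t : ℝ, c * (s ^ 2 + t ^ 2) ≤ a * s ^ 2 - 2 * (k * s * t) + b * t ^ 2 := by
  -- This `c` leaves a matrix of determinant `c²` after subtracting `c` times the identity.
  let c := (a * b - k ^ 2) / (a + b)
  have hc : 0 < c := div_pos (sub_pos.2 hk) (add_pos ha hb)
  have hac : a - c = (a ^ 2 + k ^ 2) / (a + b) := by simp only [c]; field_simp; ring
  have hac_pos : 0 < a - c := hac ▸ by positivity
  have hdet : (a - c) * (b - c) - k ^ 2 = c ^ 2 := by simp only [c]; field_simp; ring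
  refine ⟨c, hc, fun s t => ?_⟩
  have hsquares : (a - c) * ((a - c) * s ^ 2 - 2 * (k * s * t) + (b - c) * t ^ 2)
      = ((a - c) * s - k * t) ^ 2 + c ^ 2 * t ^ 2 := by rw [← hdet]; ring
  have hnonneg : 0 ≤ (a - c) * s ^ 2 - 2 * (k * s * t) + (b - c) * t ^ 2 :=
    nonneg_of_mul_nonneg_right (hsquares ▸ by positivity) hac_pos
  linarith

theorem exists_pos_mul_sq_norm_add_le_condatVuForm {K : X →L[ℝ] U} {γ σ L : ℝ} (hγ : 0 < γ)
    (hσ : 0 < σ) (hstep : γ * (σ * ‖K‖ ^ 2 + L / 2) < 1) :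
    ∃ c > 0, ∀ z, c * ‖z‖ ^ 2 + L / 2 * ‖z.1‖ ^ 2 ≤ condatVuForm K γ σ z := by
  have hgap : σ * ‖K‖ ^ 2 < γ⁻¹ - L / 2 := by
    rw [← lt_div_iff₀' hγ, one_div] at hstep
    linarith
  obtain ⟨c, hc, hform⟩ := exists_pos_mul_add_sq_le_of_sq_lt_mul (k := ‖K‖)
    ((by positivity : 0 ≤ σ * ‖K‖ ^ 2).trans_lt hgap) (inv_pos.2 hσ)
    (by rwa [← div_eq_mul_inv, lt_div_iff₀' hσ])
  refine ⟨c, hc, fun z => ?_⟩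
  have hinner : ⟪z.2, K z.1⟫ ≤ ‖K‖ * ‖z.1‖ * ‖z.2‖ := by
    rw [mul_comm]
    exact (real_inner_le_norm _ _).trans (by gcongr; exact K.le_opNorm _)
  have hnorm : ‖z‖ ^ 2 ≤ ‖z.1‖ ^ 2 + ‖z.2‖ ^ 2 := by
    rcases max_choice ‖z.1‖ ‖z.2‖ with h | h <;> rw [Prod.norm_def, h]
    · exact le_add_of_nonneg_right (sq_nonneg _)
    · exact le_add_of_nonneg_left (sq_nonneg _)
  calc c * ‖z‖ ^ 2 + L / 2 * ‖z.1‖ ^ 2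
      ≤ c * (‖z.1‖ ^ 2 + ‖z.2‖ ^ 2) + L / 2 * ‖z.1‖ ^ 2 := by gcongr
    _ ≤ γ⁻¹ * ‖z.1‖ ^ 2 - 2 * (‖K‖ * ‖z.1‖ * ‖z.2‖) + σ⁻¹ * ‖z.2‖ ^ 2 := by
        linarith [hform ‖z.1‖ ‖z.2‖]
    _ ≤ condatVuForm K γ σ z := by
        unfold condatVuForm
        linarith

theorem condatVuForm_add (K : X →L[ℝ] U) (γ σ : ℝ) (z w : X × U) :
    condatVuForm K γ σ (z + w) = condatVuForm K γ σ z + condatVuForm K γ σ w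
      + 2 * (γ⁻¹ * ⟪z.1, w.1⟫ - ⟪z.2, K w.1⟫ - ⟪w.2, K z.1⟫ + σ⁻¹ * ⟪z.2, w.2⟫) := by
  simp only [condatVuForm, Prod.fst_add, Prod.snd_add, norm_add_sq_real, map_add, inner_add_left,
    inner_add_right]
  ring

theorem condatVuForm_sub_comm (K : X →L[ℝ] U) (γ σ : ℝ) (z w : X × U) :
    condatVuForm K γ σ (z - w) = condatVuForm K γ σ (w - z) := by
  simp only [← neg_sub w z, condatVuForm, Prod.fst_neg, Prod.snd_neg, map_neg, norm_neg,
    inner_neg_neg]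

variable [CompleteSpace X] [CompleteSpace U]

/-- `z' = (x', u')` is obtained from `z = (x, u)` by a step of the (primal-first) Condat–Vũ
iteration for `0 ∈ ∂R x + C x + K* (∂H (K x))`. Both proximal steps are encoded by their optimality
conditions, that of the dual step reading `K (2x' - x) + σ⁻¹ (u - u') ∈ ∂H* u'`. -/
structure IsCondatVuStep (R : X → ℝ) (H : U → ℝ) (C : X → X) (K : X →L[ℝ] U) (γ σ : ℝ)
    (z z' : X × U) : Prop where
  primal : IsSubgradientAt R z'.1 (γ⁻¹ • (z.1 - z'.1) - C z.1 - adjoint K z.2)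
  dual : IsSubgradientAt H (K ((2 : ℝ) • z'.1 - z.1) + σ⁻¹ • (z.2 - z'.2)) z'.2

/-- `z = (x, u)` is a primal-dual solution of `0 ∈ ∂R x + C x + K* (∂H (K x))`, i.e. `x` solves this
inclusion and `u` is a selection of `∂H (K x)` witnessing it. -/
structure IsPrimalDualSolution (R : X → ℝ) (H : U → ℝ) (C : X → X) (K : X →L[ℝ] U)
    (z : X × U) : Prop where
  primal : IsSubgradientAt R z.1 (-C z.1 - adjoint K z.2)
  dual : IsSubgradientAt H (K z.1) z.2

variable {R : X → ℝ} {H : U → ℝ} {C : X → X} {K : X →L[ℝ] U} {γ σ L : ℝ}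

theorem isCondatVuStep_self_iff {z : X × U} :
    IsCondatVuStep R H C K γ σ z z ↔ IsPrimalDualSolution R H C K z := by
  have htwo : (2 : ℝ) • z.1 - z.1 = z.1 := by module
  refine ⟨fun h => ⟨?_, ?_⟩, fun h => ⟨?_, ?_⟩⟩
  · simpa using h.primal
  · simpa [htwo] using h.dual
  · simpa using h.primal
  · simpa [htwo] using h.dual

theorem IsCondatVuStep.of_tendsto {ι : Type*} {l : Filter ι} [l.NeBot] (hR : Continuous R)
    (hH : Continuous H) (hC : Continuous C) {z z' : ι → X × U} {w w' : X × U}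
    (hz : Tendsto z l (𝓝 w)) (hz' : Tendsto z' l (𝓝 w'))
    (h : ∀ i, IsCondatVuStep R H C K γ σ (z i) (z' i)) : IsCondatVuStep R H C K γ σ w w' where
  primal := by
    refine .of_tendsto hR hz'.fst_nhds ?_ fun i => (h i).primal
    exact (((hz.fst_nhds.sub hz'.fst_nhds).const_smul _).sub
      ((hC.tendsto _).comp hz.fst_nhds)).sub (((adjoint K).continuous.tendsto _).comp hz.snd_nhds)
  dual := by
    refine .of_tendsto hH ?_ hz'.snd_nhds fun i => (h i).dual
    exact ((K.continuous.tendsto _).comp ((hz'.fst_nhds.const_smul _).sub hz.fst_nhds)).add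
      ((hz.snd_nhds.sub hz'.snd_nhds).const_smul _)

theorem IsCondatVuStep.condatVuForm_sub_add_le (hL : 0 < L) (hC : IsCocoercive L C)
    {z z' s : X × U} (hz : IsCondatVuStep R H C K γ σ z z')
    (hs : IsPrimalDualSolution R H C K s) :
    condatVuForm K γ σ (z' - s) + condatVuForm K γ σ (z' - z)
      ≤ condatVuForm K γ σ (z - s) + L / 2 * ‖z'.1 - z.1‖ ^ 2 := by
  obtain ⟨x, u⟩ := z
  obtain ⟨x', u'⟩ := z'
  obtain ⟨y, v⟩ := s
  have hprimal := hz.primal.inner_sub_nonneg hs.primal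
  have hdual := hz.dual.inner_sub_nonneg hs.dual
  dsimp only at hprimal hdual
  have hforward := hC.neg_le_inner hL x x' y
  have hcross : γ⁻¹ * ⟪x' - y, x - x'⟫ - ⟪u' - v, K (x - x')⟫ - ⟪u - u', K (x' - y)⟫
        + σ⁻¹ * ⟪u' - v, u - u'⟫
      = ⟪γ⁻¹ • (x - x') - C x - adjoint K u - (-C y - adjoint K v), x' - y⟫
        + ⟪u' - v, K ((2 : ℝ) • x' - x) + σ⁻¹ • (u - u') - K y⟫ + ⟪C x - C y, x' - y⟫ := by
    rw [real_inner_comm (x - x') (x' - y)]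
    simp only [map_sub, map_smul, inner_sub_left, inner_sub_right, inner_add_right,
      real_inner_smul_left, real_inner_smul_right, inner_neg_left,
      ContinuousLinearMap.adjoint_inner_left]
    ring
  have hexpand := condatVuForm_add K γ σ ((x', u') - (y, v)) ((x, u) - (x', u'))
  rw [sub_add_sub_cancel', condatVuForm_sub_comm K γ σ (x, u) (x', u')] at hexpand
  simp only [Prod.mk_sub_mk] at hexpand ⊢
  linarith

theorem IsPrimalDualSolution.add_add_le {f : X → ℝ} {z : X × U}
    (h : IsPrimalDualSolution R H C K z) (hf : IsSubgradientAt f z.1 (C z.1)) (y : X) :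
    R z.1 + f z.1 + H (K z.1) ≤ R y + f y + H (K y) := by
  have hR := h.primal y
  have hf := hf y
  have hH := h.dual (K y)
  rw [inner_sub_left, inner_neg_left, ContinuousLinearMap.adjoint_inner_left, map_sub] at hR
  linarith

end CondatVu

section BlockRescaling

open ContinuousLinearMap (adjoint)

variable {ι X : Type*} [NormedAddCommGroup X] [InnerProductSpace ℝ X]
  {U : ι → Type*} [∀ i, NormedAddCommGroup (U i)] [∀ i, InnerProductSpace ℝ (U i)]

/-- The operator `x ↦ (c i • K i x)_i` into the Euclidean product of the dual spaces. -/
def rescaledStack (c : ι → ℝ) (K : ∀ i, X →L[ℝ] U i) : X →L[ℝ] PiLp 2 U :=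
  (PiLp.continuousLinearEquiv 2 ℝ U).symm ∘L ContinuousLinearMap.pi fun i => c i • K i

/-- The dual variable of `rescaledStack c K` representing the blocks `u i`. The factors are such
that its inner product with `rescaledStack c K x` is `a * ∑ i, ⟪u i, K i x⟫`. -/
def rescaledDual (a : ℝ) (c : ι → ℝ) (u : ∀ i, U i) : PiLp 2 U :=
  WithLp.toLp 2 fun i => (a / c i) • u i

variable {a : ℝ} {c : ι → ℝ} {K : ∀ i, X →L[ℝ] U i}

@[simp] theorem rescaledStack_apply (x : X) (i : ι) : rescaledStack c K x i = c i • K i x := rfl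

@[simp] theorem rescaledDual_apply (u : ∀ i, U i) (i : ι) :
    rescaledDual a c u i = (a / c i) • u i := rfl

variable [Fintype ι] {H : ∀ i, U i → ℝ}

/-- The function on the Euclidean product of the dual spaces whose composition with
`rescaledStack c K` is `a * ∑ i, H i (K i x)`. -/
def rescaledSum (a : ℝ) (c : ι → ℝ) (H : ∀ i, U i → ℝ) (v : PiLp 2 U) : ℝ :=
  a * ∑ i, H i ((c i)⁻¹ • v i)

theorem continuous_rescaledSum (hH : ∀ i, Continuous (H i)) : Continuous (rescaledSum a c H) := by
  unfold rescaledSum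
  fun_prop

theorem rescaledSum_rescaledStack (hc : ∀ i, c i ≠ 0) (x : X) :
    rescaledSum a c H (rescaledStack c K x) = a * ∑ i, H i (K i x) := by
  simp only [rescaledSum, rescaledStack_apply, inv_smul_smul₀ (hc _)]

theorem isSubgradientAt_rescaledSum (ha : 0 ≤ a) {v : PiLp 2 U}
    {u : ∀ i, U i} (h : ∀ i, IsSubgradientAt (H i) ((c i)⁻¹ • v i) (u i)) :
    IsSubgradientAt (rescaledSum a c H) v (rescaledDual a c u) := fun w => by
  have hinner : ⟪rescaledDual a c u, w - v⟫
      = a * ∑ i, ⟪u i, (c i)⁻¹ • w i - (c i)⁻¹ • v i⟫ := by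
    rw [PiLp.inner_apply, Finset.mul_sum]
    refine Finset.sum_congr rfl fun i _ => ?_
    rw [rescaledDual_apply, PiLp.sub_apply, ← smul_sub, real_inner_smul_left,
      real_inner_smul_right, div_eq_mul_inv, mul_assoc]
  rw [rescaledSum, rescaledSum, hinner, ← mul_add, ← Finset.sum_add_distrib]
  gcongr with i
  exact h i _

variable [CompleteSpace X] [∀ i, CompleteSpace (U i)]

theorem adjoint_rescaledStack_rescaledDual (hc : ∀ i, c i ≠ 0) (u : ∀ i, U i) :
    adjoint (rescaledStack c K) (rescaledDual a c u) = a • ∑ i, adjoint (K i) (u i) := by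
  refine ext_inner_right ℝ fun x => ?_
  simp only [ContinuousLinearMap.adjoint_inner_left, PiLp.inner_apply, rescaledDual_apply,
    rescaledStack_apply, real_inner_smul_left, real_inner_smul_right, sum_inner, Finset.mul_sum]
  refine Finset.sum_congr rfl fun i _ => ?_
  rw [← mul_assoc, mul_div_cancel₀ _ (hc i)]

theorem norm_rescaledStack_sq (c : ι → ℝ) (K : ∀ i, X →L[ℝ] U i) :
    ‖rescaledStack c K‖ ^ 2 = ‖∑ i, c i ^ 2 • (adjoint (K i)).comp (K i)‖ := by
  rw [sq, ← ContinuousLinearMap.norm_adjoint_comp_self]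
  congr 1
  refine ContinuousLinearMap.ext fun x => ext_inner_right ℝ fun y => ?_
  simp only [ContinuousLinearMap.comp_apply, ContinuousLinearMap.adjoint_inner_left,
    PiLp.inner_apply, rescaledStack_apply, real_inner_smul_left, real_inner_smul_right,
    sum_apply, smul_apply, sum_inner, sq, mul_assoc]

theorem IsCondatVuStep.of_blocks {R : X → ℝ} {C : X → X} {γ σ : ℝ} (ha : 0 < a)
    (hc : ∀ i, c i ≠ 0) {x x' : X} {u u' : ∀ i, U i}
    (hR : IsSubgradientAt R x' (γ⁻¹ • (x - x') - C x - a • ∑ i, adjoint (K i) (u i)))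
    (hH : ∀ i, IsSubgradientAt (H i)
      (K i ((2 : ℝ) • x' - x) + (a / (σ * c i ^ 2)) • (u i - u' i)) (u' i)) :
    IsCondatVuStep R (rescaledSum a c H) C (rescaledStack c K) γ σ
      (x, rescaledDual a c u) (x', rescaledDual a c u') where
  primal := by rwa [adjoint_rescaledStack_rescaledDual hc]
  dual := by
    refine isSubgradientAt_rescaledSum ha.le fun i => ?_
    convert hH i using 1
    simp only [PiLp.add_apply, PiLp.smul_apply, PiLp.sub_apply, rescaledStack_apply,
      rescaledDual_apply, ← smul_sub, smul_add, smul_smul, inv_mul_cancel₀ (hc i), one_smul]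
    congr 2
    have := hc i
    field_simp

theorem IsPrimalDualSolution.of_blocks {R : X → ℝ} {C : X → X} (ha : 0 ≤ a)
    (hc : ∀ i, c i ≠ 0) {x : X} {u : ∀ i, U i}
    (hR : IsSubgradientAt R x (-C x - a • ∑ i, adjoint (K i) (u i)))
    (hH : ∀ i, IsSubgradientAt (H i) (K i x) (u i)) :
    IsPrimalDualSolution R (rescaledSum a c H) C (rescaledStack c K) (x, rescaledDual a c u) where
  primal := by rwa [adjoint_rescaledStack_rescaledDual hc]
  dual := isSubgradientAt_rescaledSum ha fun i => by
    rw [rescaledStack_apply, inv_smul_smul₀ (hc i)]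
    exact hH i

end BlockRescaling

section Convergence

open ContinuousLinearMap (adjoint)

variable {X : Type*} [NormedAddCommGroup X] [InnerProductSpace ℝ X] [FiniteDimensional ℝ X]
  {R : X → ℝ} {γ σ : ℝ}

/-- Convergence of the Condat–Vũ iteration (Condat 2013, Vũ 2013). -/
theorem exists_tendsto_of_isCondatVuStep {U : Type*} [NormedAddCommGroup U]
    [InnerProductSpace ℝ U] [FiniteDimensional ℝ U] {H : U → ℝ} {C : X → X} {K : X →L[ℝ] U} {L : ℝ}
    (hR : Continuous R) (hH : Continuous H) (hL : 0 < L) (hC : IsCocoercive L C) (hγ : 0 < γ)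
    (hσ : 0 < σ) (hparam : γ * (σ * ‖K‖ ^ 2 + L / 2) < 1) {s : X × U}
    (hs : IsPrimalDualSolution R H C K s) {z : ℕ → X × U}
    (hz : ∀ k, IsCondatVuStep R H C K γ σ (z k) (z (k + 1))) :
    ∃ w, IsPrimalDualSolution R H C K w ∧ Tendsto z atTop (𝓝 w) := by
  obtain ⟨c, hc, hcoer⟩ := exists_pos_mul_sq_norm_add_le_condatVuForm hγ hσ hparam
  have hform_ge : ∀ w, c * ‖w‖ ^ 2 ≤ condatVuForm K γ σ w := fun w =>
    (le_add_of_nonneg_right (by positivity)).trans (hcoer w)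
  have hdecr : ∀ s, IsPrimalDualSolution R H C K s → ∀ k,
      condatVuForm K γ σ (z (k + 1) - s) + c * ‖z (k + 1) - z k‖ ^ 2
        ≤ condatVuForm K γ σ (z k - s) := fun s hs k => by
    have hle := (hz k).condatVuForm_sub_add_le hL hC hs
    have hge := hcoer (z (k + 1) - z k)
    rw [Prod.fst_sub] at hge
    linarith
  have hreg : Tendsto (fun k => z (k + 1) - z k) atTop (𝓝 0) :=
    tendsto_zero_of_add_mul_sq_norm_le hc
      (fun k => (by positivity : 0 ≤ c * ‖z k - s‖ ^ 2).trans (hform_ge _)) (hdecr s hs)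
  refine exists_tendsto_of_antitone_of_subseq_limit_mem (V := condatVuForm K γ σ)
    (S := {w | IsPrimalDualSolution R H C K w}) (by unfold condatVuForm; fun_prop)
    (by simp [condatVuForm]) hc hform_ge ⟨s, hs⟩ (fun s hs => antitone_nat_of_succ_le fun k =>
      (le_add_of_nonneg_right (by positivity)).trans (hdecr s hs k)) fun w φ hφ hlim => ?_
  have hlim_succ : Tendsto (fun n => z (φ n + 1)) atTop (𝓝 w) := by
    simpa using (hreg.comp hφ).add hlim
  exact isCondatVuStep_self_iff.1 <|
    .of_tendsto hR hH (hC.continuous hL.le) hlim hlim_succ fun n => hz (φ n)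

theorem exists_tendsto_minimizer_of_blocks {ι : Type*} [Fintype ι] {U : ι → Type*}
    [∀ i, NormedAddCommGroup (U i)] [∀ i, InnerProductSpace ℝ (U i)]
    [∀ i, FiniteDimensional ℝ (U i)] {f : X → ℝ} {g : X → X} {L : NNReal} {H : ∀ i, U i → ℝ}
    {K : ∀ i, X →L[ℝ] U i} {N : ℝ} {ω : ι → ℝ} (hR : Continuous R) (hH : ∀ i, Continuous (H i))
    (hL : 0 < L) (hf : ConvexOn ℝ Set.univ f) (hfg : ∀ x, HasGradientAt f (g x) x)
    (hg : LipschitzWith L g) (hN : 0 < N) (hω : ∀ i, 0 < ω i) (hγ : 0 < γ) (hσ : 0 < σ)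
    (hparam : γ * (σ * ‖∑ i, ω i • (adjoint (K i)).comp (K i)‖ + L / 2) < 1)
    {y : X} {v : ∀ i, U i} (hy : IsSubgradientAt R y (-g y - (1 / N) • ∑ i, adjoint (K i) (v i)))
    (hv : ∀ i, IsSubgradientAt (H i) (K i y) (v i)) {x : ℕ → X} {u : ℕ → ∀ i, U i}
    (hx : ∀ k, IsSubgradientAt R (x (k + 1))
      (γ⁻¹ • (x k - x (k + 1)) - g (x k) - (1 / N) • ∑ i, adjoint (K i) (u k i)))
    (hu : ∀ k i, IsSubgradientAt (H i)
      (K i ((2 : ℝ) • x (k + 1) - x k) + (N * ω i * σ)⁻¹ • (u k i - u (k + 1) i)) (u (k + 1) i)) :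
    ∃ xbar, (∀ z, R xbar + f xbar + 1 / N * ∑ i, H i (K i xbar)
        ≤ R z + f z + 1 / N * ∑ i, H i (K i z)) ∧
      Tendsto x atTop (𝓝 xbar) ∧ ∀ i, ∃ ubar, Tendsto (fun k => u k i) atTop (𝓝 ubar) := by
  have ha : 0 < 1 / N := one_div_pos.2 hN
  -- With this scaling the block steps `N * ω i * σ` all become the step `σ` of the product space.
  let c : ι → ℝ := fun i => √(ω i)
  have hc : ∀ i, c i ≠ 0 := fun i => (Real.sqrt_pos.2 (hω i)).ne'
  have hc_sq : ∀ i, c i ^ 2 = ω i := fun i => Real.sq_sqrt (hω i).le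
  obtain ⟨w, hw, hlim⟩ := exists_tendsto_of_isCondatVuStep (K := rescaledStack c K)
    (z := fun k => (x k, rescaledDual (1 / N) c (u k))) hR (continuous_rescaledSum hH)
    (by exact_mod_cast hL) (isCocoercive_of_lipschitzWith_gradient hL hf hfg hg) hγ hσ
    (by simpa only [norm_rescaledStack_sq, hc_sq] using hparam) (.of_blocks ha.le hc hy hv)
    fun k => .of_blocks ha hc (hx k) fun i => by
      convert hu k i using 3
      rw [hc_sq]
      field_simp
  refine ⟨w.1, fun z => ?_, hlim.fst_nhds, fun i => ⟨(c i / (1 / N)) • w.2 i, ?_⟩⟩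
  · simpa only [rescaledSum_rescaledStack hc] using
      hw.add_add_le (.of_hasGradientAt hf (hfg w.1)) z
  · have hcoord := (((PiLp.continuous_apply 2 U i).tendsto w.2).comp hlim.snd_nhds).const_smul
      (c i / (1 / N))
    refine hcoord.congr fun k => ?_
    simp only [Function.comp_apply, rescaledDual_apply, smul_smul]
    rw [div_mul_div_cancel₀ ha.ne', div_self (hc i), one_smul]

end Convergence

section Average

theorem norm_sum_sq_le_sum_inv_mul_sq_norm {ι E : Type*} [NormedAddCommGroup E] (s : Finset ι)
    {ω : ι → ℝ} (hω : ∀ i ∈ s, 0 < ω i) (hsum : ∑ i ∈ s, ω i = 1) (v : ι → E) :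
    ‖∑ i ∈ s, v i‖ ^ 2 ≤ ∑ i ∈ s, 1 / ω i * ‖v i‖ ^ 2 := by
  calc ‖∑ i ∈ s, v i‖ ^ 2 ≤ (∑ i ∈ s, ‖v i‖) ^ 2 := by gcongr; exact norm_sum_le _ _
    _ = (∑ i ∈ s, ‖v i‖) ^ 2 / ∑ i ∈ s, ω i := by rw [hsum, div_one]
    _ ≤ ∑ i ∈ s, ‖v i‖ ^ 2 / ω i := Finset.sq_sum_div_le_sum_sq_div s _ hω
    _ = ∑ i ∈ s, 1 / ω i * ‖v i‖ ^ 2 := by simp only [one_div_mul_eq_div]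

theorem convexOn_const_mul_finsetSum {ι E : Type*} [AddCommGroup E] [Module ℝ E] {t : Set E}
    (ht : Convex ℝ t) {a : ℝ} (ha : 0 ≤ a) (s : Finset ι) {f : ι → E → ℝ}
    (hf : ∀ i ∈ s, ConvexOn ℝ t (f i)) : ConvexOn ℝ t fun x => a * ∑ i ∈ s, f i x := by
  have hsum : ConvexOn ℝ t (∑ i ∈ s, f i) :=
    Finset.sum_induction f (ConvexOn ℝ t) (fun _ _ => .add) (convexOn_const 0 ht) hf
  simpa only [Finset.sum_apply, smul_eq_mul] using hsum.smul ha

theorem hasGradientAt_const_mul_finsetSum {ι E : Type*} [NormedAddCommGroup E]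
    [InnerProductSpace ℝ E] [CompleteSpace E] (a : ℝ) (s : Finset ι) {f : ι → E → ℝ} {g : ι → E}
    {x : E} (hf : ∀ i ∈ s, HasGradientAt (f i) (g i) x) :
    HasGradientAt (fun y => a * ∑ i ∈ s, f i y) (a • ∑ i ∈ s, g i) x := by
  rw [hasGradientAt_iff_hasFDerivAt, map_smul, map_sum]
  exact (HasFDerivAt.fun_sum fun i hi => (hf i hi).hasFDerivAt).const_mul a

theorem lipschitzWith_const_smul_finsetSum {ι E E' : Type*} [SeminormedAddCommGroup E]
    [NormedAddCommGroup E'] [NormedSpace ℝ E'] {s : Finset ι} {ω : ι → ℝ}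
    (hω : ∀ i ∈ s, 0 < ω i) (hsum : ∑ i ∈ s, ω i = 1) {a : ℝ} {g : ι → E → E'} {L : NNReal}
    (h : ∀ x y, a ^ 2 * ∑ i ∈ s, 1 / ω i * ‖g i x - g i y‖ ^ 2 ≤ L ^ 2 * ‖x - y‖ ^ 2) :
    LipschitzWith L fun x => a • ∑ i ∈ s, g i x := by
  refine LipschitzWith.of_dist_le_mul fun x y => ?_
  rw [dist_eq_norm, dist_eq_norm]
  refine le_of_sq_le_sq ?_ (by positivity)
  calc ‖a • ∑ i ∈ s, g i x - a • ∑ i ∈ s, g i y‖ ^ 2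
      = a ^ 2 * ‖∑ i ∈ s, (g i x - g i y)‖ ^ 2 := by
        rw [← smul_sub, ← Finset.sum_sub_distrib, norm_smul, mul_pow, Real.norm_eq_abs, sq_abs]
    _ ≤ a ^ 2 * ∑ i ∈ s, 1 / ω i * ‖g i x - g i y‖ ^ 2 := by
        gcongr
        exact norm_sum_sq_le_sum_inv_mul_sq_norm s hω hsum _
    _ ≤ (L * ‖x - y‖) ^ 2 := by rw [mul_pow]; exact h x y

end Average

/-- Theorem 11: convergence of the Distributed Condat–Vũ algorithm (Form I). -/
theorem distributed_condat_vu_convergence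
    {𝒳 : Type*}
    [NormedAddCommGroup 𝒳] [InnerProductSpace ℝ 𝒳] [FiniteDimensional ℝ 𝒳]
    {M : ℕ} (hM : 1 ≤ M)
    {𝒰 : Fin M → Type*}
    [∀ m, NormedAddCommGroup (𝒰 m)] [∀ m, InnerProductSpace ℝ (𝒰 m)]
    [∀ m, FiniteDimensional ℝ (𝒰 m)]
    (K : ∀ m : Fin M, 𝒳 →L[ℝ] 𝒰 m)
    (R : 𝒳 → ℝ) (F : Fin M → 𝒳 → ℝ) (H : ∀ m : Fin M, 𝒰 m → ℝ)
    (F' : Fin M → 𝒳 → 𝒳)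
    (hRconv : ConvexOn ℝ Set.univ R)
    (hFconv : ∀ m, ConvexOn ℝ Set.univ (F m))
    (hHconv : ∀ m, ConvexOn ℝ Set.univ (H m))
    (hFgrad : ∀ m z, HasGradientAt (F m) (F' m z) z)
    (hFlipschitz : ∀ m, ∃ Lm : ℝ, 0 < Lm ∧
      ∀ z z', ‖F' m z - F' m z'‖ ≤ Lm * ‖z - z'‖)
    -- weights
    (ω : Fin M → ℝ) (hω : ∀ m, 0 < ω m) (hωsum : ∑ m, ω m = 1)
    -- averaged smoothness constant
    (L : ℝ) (hL : 0 < L)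
    (havg : ∀ z z' : 𝒳,
      (1 / (M : ℝ)^2) * ∑ m, (1 / ω m) * ‖F' m z - F' m z'‖^2
        ≤ L^2 * ‖z - z'‖^2)
    -- Assumption: existence of a primal-dual solution
    (xstar : 𝒳) (rstar : 𝒳) (hstar : ∀ m : Fin M, 𝒰 m)
    (hrstar : IsSubgradientAt R xstar rstar)
    (hhstar : ∀ m, IsSubgradientAt (H m) (K m xstar) (hstar m))
    (hopt : rstar + (1 / (M : ℝ)) •
      ∑ m, (F' m xstar + (ContinuousLinearMap.adjoint (K m)) (hstar m)) = 0)
    -- parameters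
    (γ σ : ℝ) (hγ0 : 0 < γ) (hσ0 : 0 < σ)
    (hparam : γ * (σ *
        ‖∑ m, ω m • ((ContinuousLinearMap.adjoint (K m)).comp (K m))‖
      + L / 2) < 1)
    -- Distributed Condat–Vũ iterates (Form I)
    (x : ℕ → 𝒳) (a : ℕ → Fin M → 𝒳) (u : ℕ → ∀ m : Fin M, 𝒰 m)
    (ha0 : ∀ m, a 0 m =
      (ContinuousLinearMap.adjoint (K m)) (u 0 m) + F' m (x 0))
    (hx : ∀ k, IsProxPt γ R (x k - (γ / (M : ℝ)) • ∑ m, a k m) (x (k+1)))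
    (hu : ∀ k m, ∃ p : 𝒰 m,
      IsProxPt (1 / ((M : ℝ) * ω m * σ)) (H m)
        ((1 / ((M : ℝ) * ω m * σ)) •
          (u k m + ((M : ℝ) * ω m * σ) • K m ((2:ℝ) • x (k+1) - x k))) p ∧
      u (k+1) m = (u k m + ((M : ℝ) * ω m * σ) • K m ((2:ℝ) • x (k+1) - x k))
        - ((M : ℝ) * ω m * σ) • p)
    (ha : ∀ k m, a (k+1) m =
      (ContinuousLinearMap.adjoint (K m)) (u (k+1) m) + F' m (x (k+1))) :
    ∃ xbar : 𝒳,
      (∀ y, R xbar + (1 / (M : ℝ)) * ∑ m, (F m xbar + H m (K m xbar))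
        ≤ R y + (1 / (M : ℝ)) * ∑ m, (F m y + H m (K m y))) ∧
      Tendsto x atTop (𝓝 xbar) ∧
      (∀ m, ∃ ubar : 𝒰 m, Tendsto (fun k => u k m) atTop (𝓝 ubar)) := by
  have ha_all : ∀ k m, a k m = ContinuousLinearMap.adjoint (K m) (u k m) + F' m (x k)
    | 0 => ha0
    | k + 1 => ha k
  have hM0 : (0 : ℝ) < M := by exact_mod_cast hM
  lift L to NNReal using hL.le
  refine (exists_tendsto_minimizer_of_blocks hRconv.locallyLipschitz.continuous
    (fun m => (hHconv m).locallyLipschitz.continuous) (by exact_mod_cast hL)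
    (convexOn_const_mul_finsetSum convex_univ (one_div_pos.2 hM0).le _ fun m _ => hFconv m)
    (fun z => hasGradientAt_const_mul_finsetSum _ _ fun m _ => hFgrad m z)
    (lipschitzWith_const_smul_finsetSum (fun m _ => hω m) hωsum
      (by simpa only [one_div_pow] using havg))
    hM0 hω hγ0 hσ0 hparam (y := xstar) ?optimality hhstar (x := x) (u := u)
    (fun k => ?primal) fun k m => ?dual).imp fun xbar ⟨hmin, hlim⟩ =>
      ⟨by simpa only [Finset.sum_add_distrib, mul_add, ← add_assoc] using hmin, hlim⟩
  case optimality =>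
    convert hrstar using 1
    rw [eq_neg_of_add_eq_zero_left hopt, Finset.sum_add_distrib]
    module
  case primal =>
    convert (hx k).isSubgradientAt hRconv hγ0 using 1
    simp only [ha_all, Finset.sum_add_distrib]
    match_scalars <;> field_simp
  case dual =>
    obtain ⟨p, hp, hup⟩ := hu k m
    have hωm := hω m
    exact hp.isSubgradientAt_add_smul_sub (hHconv m) (by positivity) hup
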